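/- Let 0 < t < 1 and r = √(1−t²). The family of matrices 𝒮 = { τ(T_{(θ,η)}) : (θ,η) ∈ [0,2π)² } ⊆ GL₄(ℝ) is strongly irreducible: there exists no finite family V₁, …, V_N of nonzero proper linear subspaces of ℝ⁴ such that every matrix M ∈ 𝒮 satisfies M(V₁ ∪ … ∪ V_N) = V₁ ∪ … ∪ V_N. In particular, no nonzero proper subspace of ℝ⁴ is invariant under all the matrices τ(T_{(θ,η)}), (θ,η) ∈ [0,2π)². -/

import Mathlib

open Matrix Complex

/-- The algebra embedding `τ : M₂(ℂ) → M₄(ℝ)` replacing each entry `a` by the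
`2×2` block `Re(a)I + Im(a)J`, with `J = [[0,1],[−1,0]]`. -/
noncomputable def tauMap (A : Matrix (Fin 2) (Fin 2) ℂ) : Matrix (Fin 4) (Fin 4) ℝ :=
  !![(A 0 0).re,  (A 0 0).im,  (A 0 1).re,  (A 0 1).im;
     -(A 0 0).im, (A 0 0).re,  -(A 0 1).im, (A 0 1).re;
     (A 1 0).re,  (A 1 0).im,  (A 1 1).re,  (A 1 1).im;
     -(A 1 0).im, (A 1 0).re,  -(A 1 1).im, (A 1 1).re]

/-- The matrix `T_{(θ,η)}` built from transmission coefficient `t` and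
reflection coefficient `r`. -/
noncomputable def Tmat (t r θ η : ℝ) : Matrix (Fin 2) (Fin 2) ℂ :=
  !![-Complex.exp (-Complex.I * θ),
     (Complex.I * r / t) * (Complex.exp (-Complex.I * θ) - 1);
     -(Complex.I * r / t) * (Complex.exp (-Complex.I * θ) - Complex.exp (Complex.I * (η - θ))),
     -((r : ℂ)^2 / (t : ℂ)^2) *
        (Complex.exp (-Complex.I * θ) - 1 - Complex.exp (Complex.I * (η - θ)))
       - (1 / (t : ℂ)^2) * Complex.exp (Complex.I * η)]

/-!
In complex coordinates `ℂ² ≃ ℝ⁴`, `T_{(θ,η)}` is affine in each of the phases `a = e^{-iθ}` and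
`b = e^{iη}` separately. Three distinct points of a circle span its plane affinely, so if finitely
many real subspaces cover the points `T x` for infinitely many values of both phases, the pigeonhole
principle yields a single subspace containing `T x` for *all* `a, b ∈ ℂ`. For `x ≠ 0` and a suitable
`a`, the coefficient of `b` in `T x` is a nonzero point of `0 × ℂ`; as `b` ranges over `ℂ`, the
subspace contains all of `0 × ℂ`. Starting again from `x = (0, 1)` gives a member of the family that
contains `0 × ℂ` and, looking at the first coordinate of `T x`, all of `ℂ²`.
-/

open Module EuclideanGeometry

section CircleCovering

variable {ι V P : Type*} [Finite ι] [NormedAddCommGroup V] [InnerProductSpace ℝ V]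
  [Fact (finrank ℝ V = 2)] [MetricSpace P] [NormedAddTorsor V P]

lemma exists_eq_top_of_cospherical_of_infinite {s : Set P} (hs : Cospherical s) (hinf : s.Infinite)
    (S : ι → AffineSubspace ℝ P) (hS : ∀ p ∈ s, ∃ i, p ∈ S i) : ∃ i, S i = ⊤ := by
  have : FiniteDimensional ℝ V := .of_fact_finrank_eq_two
  obtain ⟨j, hj⟩ : ∃ j, (s ∩ S j).Infinite := by
    by_contra! hfin
    exact hinf <| (Set.finite_iUnion hfin).subset fun p hp ↦
      Set.mem_iUnion.2 <| (hS p hp).imp fun _ hi ↦ ⟨hp, hi⟩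
  let p : Fin 3 → P := fun k ↦ hj.natEmbedding _ k
  have hp_inj : Function.Injective p :=
    Subtype.val_injective.comp <| (hj.natEmbedding _).injective.comp Fin.val_injective
  have hp_mem (k : Fin 3) : p k ∈ s ∩ S j := (hj.natEmbedding _ k).2
  have hp_span : affineSpan ℝ (Set.range p) = ⊤ := by
    refine (hs.affineIndependent (Set.range_subset_iff.2 fun k ↦ (hp_mem k).1)
      hp_inj).affineSpan_eq_top_iff_card_eq_finrank_add_one.2 ?_
    rw [Fintype.card_fin, Fact.out (p := finrank ℝ V = 2)]
  exact ⟨j, top_le_iff.1 (hp_span ▸ affineSpan_le.2 (Set.range_subset_iff.2 fun k ↦ (hp_mem k).2))⟩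

variable {V' P' W Q : Type*} [NormedAddCommGroup V'] [InnerProductSpace ℝ V']
  [Fact (finrank ℝ V' = 2)] [MetricSpace P'] [NormedAddTorsor V' P']
  [AddCommGroup W] [Module ℝ W] [AddTorsor W Q]

lemma exists_forall_mem_of_biaffine {s : Set P} {s' : Set P'} (hs : Cospherical s)
    (hsinf : s.Infinite) (hs' : Cospherical s') (hsinf' : s'.Infinite)
    (f : P → P' →ᵃ[ℝ] Q) (g : P' → P →ᵃ[ℝ] Q) (hfg : ∀ p p', f p p' = g p' p)
    (S : ι → AffineSubspace ℝ Q) (hS : ∀ p ∈ s, ∀ p' ∈ s', ∃ i, f p p' ∈ S i) :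
    ∃ i, ∀ p p', f p p' ∈ S i := by
  have hleft : ∀ p' ∈ s', ∃ i, ∀ p, f p p' ∈ S i := by
    intro p' hp'
    obtain ⟨i, hi⟩ := exists_eq_top_of_cospherical_of_infinite hs hsinf
      (fun i ↦ (S i).comap (g p')) fun p hp ↦ by simpa [← hfg] using hS p hp p' hp'
    refine ⟨i, fun p ↦ ?_⟩
    rw [hfg, ← AffineSubspace.mem_comap, hi]
    exact AffineSubspace.mem_top ℝ V p
  obtain ⟨i, hi⟩ := exists_eq_top_of_cospherical_of_infinite hs' hsinf'
    (fun i ↦ ⨅ p, (S i).comap (f p)) fun p' hp' ↦ by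
      simpa [AffineSubspace.mem_iInf_iff] using hleft p' hp'
  refine ⟨i, fun p p' ↦ AffineSubspace.mem_comap.1 ?_⟩
  exact (iInf_eq_top.1 hi p).symm ▸ AffineSubspace.mem_top ℝ V' p'

end CircleCovering

section PhaseMatrix

/-- The affine map `z ↦ z • v + p` parametrizing a complex line, taken over `ℝ` so that real
subspaces can be pulled back along it. -/
noncomputable def complexLine {E : Type*} [AddCommGroup E] [Module ℂ E] (p v : E) : ℂ →ᵃ[ℝ] E :=
  ((LinearMap.toSpanSingleton ℂ E v).restrictScalars ℝ).toAffineMap + AffineMap.const ℝ ℂ p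

lemma complexLine_apply {E : Type*} [AddCommGroup E] [Module ℂ E] (p v : E) (z : ℂ) :
    complexLine p v z = z • v + p := by
  simp [complexLine]

/-- The matrix `T_{(θ,η)}` with its phases `a = e^{-iθ}` and `b = e^{iη}` freed to be arbitrary
complex numbers, and its coefficients `m = ir/t` and `s = 1/t²` treated as independent. -/
def phaseMatrix (m s a b : ℂ) : Matrix (Fin 2) (Fin 2) ℂ :=
  !![-a, m * (a - 1);
     -m * (a - a * b), m ^ 2 * (a - 1 - a * b) - s * b]

lemma Tmat_eq_phaseMatrix (t r θ η : ℝ) :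
    Tmat t r θ η = phaseMatrix (I * r / t) (1 / (t : ℂ) ^ 2)
      ↑(Circle.exp θ)⁻¹ ↑(Circle.exp η) := by
  have hexp : exp (I * (η - θ)) = exp (-I * θ) * exp (I * η) := by
    rw [← exp_add]
    ring_nf
  have hsq : -((r : ℂ) ^ 2 / (t : ℂ) ^ 2) = (I * r / t) ^ 2 := by
    rw [div_pow, mul_pow, I_sq]
    ring
  rw [Tmat, phaseMatrix, hexp, hsq, ← Circle.exp_neg, Circle.coe_exp, Circle.coe_exp]
  simp only [neg_mul, mul_comm I, ofReal_neg]

variable {m s : ℂ}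

lemma phaseMatrix_mulVec (a b : ℂ) (x : Fin 2 → ℂ) :
    phaseMatrix m s a b *ᵥ x =
      ![-a * x 0 + m * (a - 1) * x 1,
        -m * (a - a * b) * x 0 + (m ^ 2 * (a - 1 - a * b) - s * b) * x 1] := by
  simp [phaseMatrix, vecHead, vecTail]

lemma phaseMatrix_mulVec_eq_smul_left (a b : ℂ) (x : Fin 2 → ℂ) :
    phaseMatrix m s a b *ᵥ x =
      a • ![-x 0 + m * x 1, (1 - b) * m * (-x 0 + m * x 1)] + phaseMatrix m s 0 b *ᵥ x := by
  simp only [phaseMatrix_mulVec, smul_vec2, smul_eq_mul, vec2_add]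
  exact vec2_eq (by ring) (by ring)

lemma phaseMatrix_mulVec_eq_smul_right (a b : ℂ) (x : Fin 2 → ℂ) :
    phaseMatrix m s a b *ᵥ x =
      b • ![0, a * m * (x 0 - m * x 1) - s * x 1] + phaseMatrix m s a 0 *ᵥ x := by
  simp only [phaseMatrix_mulVec, smul_vec2, smul_eq_mul, vec2_add]
  exact vec2_eq (by ring) (by ring)

lemma exists_forall_phaseMatrix_mulVec_mem {ι : Type*} [Finite ι] {A B : Set ℂ}
    (hA : Cospherical A) (hAinf : A.Infinite) (hB : Cospherical B) (hBinf : B.Infinite)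
    (V : ι → Submodule ℝ (Fin 2 → ℂ)) (x : Fin 2 → ℂ)
    (hV : ∀ a ∈ A, ∀ b ∈ B, ∃ i, phaseMatrix m s a b *ᵥ x ∈ V i) :
    ∃ i, ∀ a b, phaseMatrix m s a b *ᵥ x ∈ V i := by
  have : Fact (finrank ℝ ℂ = 2) := ⟨Complex.finrank_real_complex⟩
  let f (a : ℂ) : ℂ →ᵃ[ℝ] Fin 2 → ℂ :=
    complexLine (phaseMatrix m s a 0 *ᵥ x) ![0, a * m * (x 0 - m * x 1) - s * x 1]
  let g (b : ℂ) : ℂ →ᵃ[ℝ] Fin 2 → ℂ :=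
    complexLine (phaseMatrix m s 0 b *ᵥ x) ![-x 0 + m * x 1, (1 - b) * m * (-x 0 + m * x 1)]
  have hf (a b : ℂ) : f a b = phaseMatrix m s a b *ᵥ x := by
    rw [complexLine_apply, ← phaseMatrix_mulVec_eq_smul_right]
  have hg (a b : ℂ) : g b a = phaseMatrix m s a b *ᵥ x := by
    rw [complexLine_apply, ← phaseMatrix_mulVec_eq_smul_left]
  simpa [hf] using exists_forall_mem_of_biaffine hA hAinf hB hBinf f g
    (fun a b ↦ (hf a b).trans (hg a b).symm) (fun i ↦ (V i).toAffineSubspace)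
    (by simpa [hf] using hV)

lemma snd_axis_mem_of_forall_phaseMatrix_mulVec_mem (hm : m ≠ 0) (hs : s ≠ 0)
    {W : Submodule ℝ (Fin 2 → ℂ)} {x : Fin 2 → ℂ} (hx : x ≠ 0)
    (hW : ∀ a b, phaseMatrix m s a b *ᵥ x ∈ W) (c : ℂ) : ![0, c] ∈ W := by
  obtain ⟨a, ha⟩ : ∃ a, a * m * (x 0 - m * x 1) - s * x 1 ≠ 0 := by
    by_contra! hzero
    have hx1 : x 1 = 0 := by simpa [hs] using hzero 0
    have hx0 : x 0 = 0 := by simpa [hm, hx1] using hzero 1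
    exact hx (funext <| Fin.forall_fin_two.2 ⟨hx0, hx1⟩)
  have hdiff := W.sub_mem (hW a (c / (a * m * (x 0 - m * x 1) - s * x 1))) (hW a 0)
  rwa [phaseMatrix_mulVec_eq_smul_right, add_sub_cancel_right, smul_vec2, smul_zero,
    smul_eq_mul, div_mul_cancel₀ c ha] at hdiff

lemma eq_top_of_forall_phaseMatrix_mulVec_snd_mem (hm : m ≠ 0) (hs : s ≠ 0)
    {W : Submodule ℝ (Fin 2 → ℂ)}
    (hW : ∀ a b, phaseMatrix m s a b *ᵥ ![0, 1] ∈ W) : W = ⊤ := by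
  have hsnd := snd_axis_mem_of_forall_phaseMatrix_mulVec_mem hm hs (by simp) hW
  refine eq_top_iff.2 fun z _ ↦ ?_
  have hz : z = phaseMatrix m s (z 0 / m + 1) 1 *ᵥ ![0, 1] + ![0, z 1 + m ^ 2 + s] := by
    rw [phaseMatrix_mulVec]
    ext k
    fin_cases k <;> simp [mul_div_cancel₀ _ hm]
  exact hz ▸ W.add_mem (hW _ _) (hsnd _)

theorem eq_bot_of_phaseMatrix_mulVec_mem (hm : m ≠ 0) (hs : s ≠ 0) {ι : Type*} [Finite ι]
    {A B : Set ℂ} (hA : Cospherical A) (hAinf : A.Infinite) (hB : Cospherical B)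
    (hBinf : B.Infinite) {V : ι → Submodule ℝ (Fin 2 → ℂ)} (hVtop : ∀ i, V i ≠ ⊤)
    (hV : ∀ a ∈ A, ∀ b ∈ B, ∀ i, ∀ x ∈ V i, ∃ j, phaseMatrix m s a b *ᵥ x ∈ V j) (i : ι) :
    V i = ⊥ := by
  have hall : ∀ i, ∀ x ∈ V i, ∃ j, ∀ a b, phaseMatrix m s a b *ᵥ x ∈ V j := fun i x hx ↦
    exists_forall_phaseMatrix_mulVec_mem hA hAinf hB hBinf V x fun a ha b hb ↦ hV a ha b hb i x hx
  refine (Submodule.eq_bot_iff _).2 fun x hx ↦ by_contra fun hx0 ↦ ?_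
  obtain ⟨j, hj⟩ := hall i x hx
  have haxis := snd_axis_mem_of_forall_phaseMatrix_mulVec_mem hm hs hx0 hj 1
  obtain ⟨k, hk⟩ := hall j _ haxis
  exact hVtop k (eq_top_of_forall_phaseMatrix_mulVec_snd_mem hm hs hk)

end PhaseMatrix

section Realification

/-- The identification `ℂ² ≃ ℝ⁴` carrying the action of `A` to that of `tauMap A`. A complex number
`z` corresponds to `(Re z, -Im z)`, because multiplication by `i` corresponds to
`J = [[0,1],[-1,0]]`. -/
def realCoords : (Fin 2 → ℂ) ≃ₗ[ℝ] (Fin 4 → ℝ) where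
  toFun z := ![(z 0).re, -(z 0).im, (z 1).re, -(z 1).im]
  invFun x := ![⟨x 0, -x 1⟩, ⟨x 2, -x 3⟩]
  map_add' z w := by
    ext k
    fin_cases k <;> simp [add_comm]
  map_smul' c z := by simp
  left_inv z := by
    ext k
    fin_cases k <;> simp
  right_inv x := by
    ext k
    fin_cases k <;> simp

lemma tauMap_mulVec_realCoords (A : Matrix (Fin 2) (Fin 2) ℂ) (z : Fin 2 → ℂ) :
    tauMap A *ᵥ realCoords z = realCoords (A *ᵥ z) := by
  ext k
  fin_cases k <;>
    simp [tauMap, realCoords, mulVec, dotProduct, Fin.sum_univ_four, sub_eq_add_neg,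
      add_assoc, add_comm, add_left_comm]

end Realification

lemma cospherical_coe_image_circle (s : Set Circle) : Cospherical ((↑) '' s : Set ℂ) :=
  ⟨0, 1, by rintro _ ⟨z, -, rfl⟩; simpa using z.norm_coe⟩

lemma infinite_circle_exp_image_Ico : (Circle.exp '' Set.Ico 0 (2 * Real.pi)).Infinite :=
  (Set.Ico_infinite Real.two_pi_pos).image (Circle.exp_injOn_Ico (by simp))

theorem eq_bot_of_tauMap_Tmat_mulVec_mem {t r : ℝ} (ht : t ≠ 0) (hr : r ≠ 0) {Θ H : Set ℝ}
    (hΘ : (Circle.exp '' Θ).Infinite) (hH : (Circle.exp '' H).Infinite)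
    {ι : Type*} [Finite ι] {V : ι → Submodule ℝ (Fin 4 → ℝ)} (hVtop : ∀ i, V i ≠ ⊤)
    (hV : ∀ θ ∈ Θ, ∀ η ∈ H, ∀ i, ∀ x ∈ V i, ∃ j, tauMap (Tmat t r θ η) *ᵥ x ∈ V j) (i : ι) :
    V i = ⊥ := by
  let e := (Submodule.orderIsoMapComap realCoords).symm
  have hm : I * r / t ≠ 0 := by simp [hr, ht]
  have hs : 1 / (t : ℂ) ^ 2 ≠ 0 := by simp [ht]
  refine (map_eq_bot_iff e).1 <| eq_bot_of_phaseMatrix_mulVec_mem hm hs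
    (cospherical_coe_image_circle (Circle.exp '' Θ)⁻¹)
    ((Set.infinite_inv.2 hΘ).image Circle.coe_injective.injOn)
    (cospherical_coe_image_circle (Circle.exp '' H)) (hH.image Circle.coe_injective.injOn)
    (V := fun i ↦ e (V i)) (fun i ↦ (map_eq_top_iff e).not.2 (hVtop i)) ?_ i
  rw [← Set.image_inv_eq_inv]
  rintro _ ⟨_, ⟨_, ⟨θ, hθ, rfl⟩, rfl⟩, rfl⟩ _ ⟨_, ⟨η, hη, rfl⟩, rfl⟩ i z hz
  obtain ⟨j, hj⟩ := hV θ hθ η hη i (realCoords z) hz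
  refine ⟨j, ?_⟩
  rwa [tauMap_mulVec_realCoords, Tmat_eq_phaseMatrix] at hj

theorem strongly_irreducible_tau_T_general {t r : ℝ} (ht : t ≠ 0) (hr : r ≠ 0) {Θ H : Set ℝ}
    (hΘ : (Circle.exp '' Θ).Infinite) (hH : (Circle.exp '' H).Infinite) :
    (¬ ∃ (N : ℕ) (V : Fin (N + 1) → Submodule ℝ (Fin 4 → ℝ)),
        (∀ i, V i ≠ ⊥ ∧ V i ≠ ⊤) ∧
        (∀ θ η : ℝ, θ ∈ Θ → η ∈ H →
          (tauMap (Tmat t r θ η)).mulVec '' (⋃ i, (V i : Set (Fin 4 → ℝ)))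
            ⊆ ⋃ i, (V i : Set (Fin 4 → ℝ)))) ∧
    (∀ W : Submodule ℝ (Fin 4 → ℝ),
      (∀ θ η : ℝ, θ ∈ Θ → η ∈ H → ∀ x ∈ W, (tauMap (Tmat t r θ η)).mulVec x ∈ W) →
      W = ⊥ ∨ W = ⊤) := by
  refine ⟨?_, fun W hW ↦ or_iff_not_imp_right.2 fun hWtop ↦ ?_⟩
  · rintro ⟨N, V, hVproper, hV⟩
    refine (hVproper 0).1 <| eq_bot_of_tauMap_Tmat_mulVec_mem ht hr hΘ hH
      (fun i ↦ (hVproper i).2) (fun θ hθ η hη i x hx ↦ ?_) 0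
    exact Set.mem_iUnion.1 (hV θ η hθ hη ⟨x, Set.mem_iUnion_of_mem i hx, rfl⟩)
  · exact eq_bot_of_tauMap_Tmat_mulVec_mem ht hr hΘ hH (V := fun _ : Unit ↦ W) (fun _ ↦ hWtop)
      (fun θ hθ η hη _ x hx ↦ ⟨(), hW θ η hθ hη x hx⟩) ()

theorem strongly_irreducible_tau_T (t r : ℝ) (ht : 0 < t) (ht1 : t < 1)
    (hr : r = Real.sqrt (1 - t ^ 2)) :
    -- strong irreducibility: no finite family of nonzero proper subspaces of ℝ⁴ whose
    -- union is permuted by all the matrices τ(T_{(θ,η)}), (θ,η) ∈ [0,2π)²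
    (¬ ∃ (N : ℕ) (V : Fin (N + 1) → Submodule ℝ (Fin 4 → ℝ)),
        (∀ i, V i ≠ ⊥ ∧ V i ≠ ⊤) ∧
        (∀ θ η : ℝ, θ ∈ Set.Ico 0 (2 * Real.pi) → η ∈ Set.Ico 0 (2 * Real.pi) →
          (tauMap (Tmat t r θ η)).mulVec '' (⋃ i, (V i : Set (Fin 4 → ℝ)))
            = ⋃ i, (V i : Set (Fin 4 → ℝ)))) ∧
    -- in particular: irreducibility
    (∀ W : Submodule ℝ (Fin 4 → ℝ),
      (∀ θ η : ℝ, θ ∈ Set.Ico 0 (2 * Real.pi) → η ∈ Set.Ico 0 (2 * Real.pi) →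
        ∀ x ∈ W, (tauMap (Tmat t r θ η)).mulVec x ∈ W) →
      W = ⊥ ∨ W = ⊤) := by
  have hr0 : r ≠ 0 := hr ▸ (Real.sqrt_pos.2 (by nlinarith)).ne'
  exact (strongly_irreducible_tau_T_general ht.ne' hr0 infinite_circle_exp_image_Ico
    infinite_circle_exp_image_Ico).imp_left fun hno ⟨N, V, hVproper, hV⟩ ↦
      hno ⟨N, V, hVproper, fun θ η hθ hη ↦ (hV θ η hθ hη).subset⟩
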